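/- arXiv:2511.18377 — 2 statements merged into one kernel-verified Lean document; each statement's English description precedes it below -/
import Mathlib

section
/- Let n ≥ 1 and p ≥ 1, let a : Finset (Fin n) → ℝ be a coefficient assignment vanishing on every subset of odd cardinality, and consider the QAOA with initial Hamiltonian H_i = −∑_{i} X i, final Hamiltonian H_f = ∑_{S : Finset (Fin n)} (a S) • ∏_{i ∈ S} Z i (only terms with an even number of spin interactions), and initial state ψ₀ = ψ₊. Then the energy landscape is periodic in each β variable with period π: for every index l, ⟨H_f⟩(β₁, …, β_l + π, …, β_p, γ) = ⟨H_f⟩(β, γ) for all β, γ ∈ ℝ^p. -/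
open Complex Matrix

/-- Pauli-X on qubit `i` of `n` qubits. -/
def PauliX (n : ℕ) (i : Fin n) : Matrix (Fin n → Fin 2) (Fin n → Fin 2) ℂ :=
  fun x y => if (∀ j, j ≠ i → x j = y j) ∧ x i ≠ y i then 1 else 0

/-- Pauli-Z on qubit `i` of `n` qubits. -/
def PauliZ (n : ℕ) (i : Fin n) : Matrix (Fin n → Fin 2) (Fin n → Fin 2) ℂ :=
  Matrix.diagonal fun x => (-1 : ℂ) ^ (x i : ℕ)

/-- Flip bit `i` of a bit string. -/
def bitFlip (n : ℕ) (i : Fin n) (x : Fin n → Fin 2) : Fin n → Fin 2 :=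
  Function.update x i (x i + 1)

lemma pauliX_cond_iff (n : ℕ) (i : Fin n) (x y : Fin n → Fin 2) :
    ((∀ j, j ≠ i → x j = y j) ∧ x i ≠ y i) ↔ y = bitFlip n i x := by
  constructor
  · rintro ⟨h1, h2⟩
    funext j
    by_cases hj : j = i
    · subst hj
      simp only [bitFlip, Function.update_self]
      revert h2
      generalize x j = a; generalize y j = b
      revert a b; decide
    · rw [bitFlip, Function.update_of_ne hj]
      exact (h1 j hj).symm
  · rintro rfl
    refine ⟨fun j hj => ?_, ?_⟩
    · rw [bitFlip, Function.update_of_ne hj]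
    · simp only [bitFlip, Function.update_self]
      generalize x i = a
      revert a; decide

lemma pauliX_eq (n : ℕ) (i : Fin n) :
    PauliX n i = fun x y => if y = bitFlip n i x then 1 else 0 := by
  funext x y
  rw [PauliX, if_congr (pauliX_cond_iff n i x y) rfl rfl]

lemma pauliX_mul_pauliX (n : ℕ) (i j : Fin n) :
    PauliX n i * PauliX n j
      = fun x y => if y = bitFlip n j (bitFlip n i x) then 1 else 0 := by
  funext x y
  rw [Matrix.mul_apply]
  simp only [pauliX_eq]
  rw [Finset.sum_eq_single (bitFlip n i x)]
  · simp
  · intro z _ hz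
    rw [if_neg hz, zero_mul]
  · intro h; exact absurd (Finset.mem_univ _) h

lemma bitFlip_comm (n : ℕ) (i j : Fin n) (x : Fin n → Fin 2) :
    bitFlip n j (bitFlip n i x) = bitFlip n i (bitFlip n j x) := by
  rcases eq_or_ne i j with rfl | h
  · rfl
  · simp only [bitFlip, Function.update_of_ne h, Function.update_of_ne (Ne.symm h),
      Function.update_self]
    exact Function.update_comm h _ _ x

lemma pauliX_commute (n : ℕ) (i j : Fin n) : Commute (PauliX n i) (PauliX n j) := by
  show _ * _ = _ * _
  rw [pauliX_mul_pauliX, pauliX_mul_pauliX]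
  funext x y
  rw [bitFlip_comm]

lemma pauliZ_commute (n : ℕ) (i j : Fin n) : Commute (PauliZ n i) (PauliZ n j) := by
  show _ * _ = _ * _
  simp only [PauliZ, Matrix.diagonal_mul_diagonal]
  have h : (fun x : Fin n → Fin 2 => (-1 : ℂ) ^ (x i : ℕ) * (-1) ^ (x j : ℕ))
      = fun x : Fin n → Fin 2 => (-1 : ℂ) ^ (x j : ℕ) * (-1) ^ (x i : ℕ) := by
    funext x; ring
  rw [h]

/-- The flip-all operator `∏ i, X i`. -/
def flipAll (n : ℕ) : Matrix (Fin n → Fin 2) (Fin n → Fin 2) ℂ :=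
  Finset.univ.noncommProd (PauliX n) fun a _ b _ _ => pauliX_commute n a b

/-- The parity operator `∏ i ∈ S, Z i`. -/
def ZProd (n : ℕ) (S : Finset (Fin n)) : Matrix (Fin n → Fin 2) (Fin n → Fin 2) ℂ :=
  S.noncommProd (PauliZ n) fun a _ b _ _ => pauliZ_commute n a b

/-- The uniform superposition state. -/
noncomputable def psiPlus (n : ℕ) : (Fin n → Fin 2) → ℂ :=
  fun _ => (((Real.sqrt 2)⁻¹ : ℝ) : ℂ) ^ n

/-- A single QAOA layer `exp(-(i β/2) H_i) * exp(-(i γ/2) H_f)`. -/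
noncomputable def qaoaLayer {m : Type} [Fintype m] [DecidableEq m]
    (Hi Hf : Matrix m m ℂ) (β γ : ℝ) : Matrix m m ℂ :=
  NormedSpace.exp ((-(Complex.I * (β : ℂ) / 2)) • Hi) *
    NormedSpace.exp ((-(Complex.I * (γ : ℂ) / 2)) • Hf)

/-- The QAOA output state `L(β_p,γ_p) ⋯ L(β_1,γ_1) ψ₀`. -/
noncomputable def qaoaState {m : Type} [Fintype m] [DecidableEq m] (p : ℕ)
    (Hi Hf : Matrix m m ℂ) (psi0 : m → ℂ) (β γ : Fin p → ℝ) : m → ℂ :=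
  (((List.finRange p).reverse.map fun k => qaoaLayer Hi Hf (β k) (γ k)).prod).mulVec psi0

/-- The QAOA energy landscape `⟨ψ(β,γ), H_f ψ(β,γ)⟩`. -/
noncomputable def qaoaEnergy {m : Type} [Fintype m] [DecidableEq m] (p : ℕ)
    (Hi Hf : Matrix m m ℂ) (psi0 : m → ℂ) (β γ : Fin p → ℝ) : ℂ :=
  ∑ x, (starRingEnd ℂ) (qaoaState p Hi Hf psi0 β γ x) *
    Hf.mulVec (qaoaState p Hi Hf psi0 β γ) x

/-!
Advancing `β l` by `π` inserts the factor `U = exp((i π/2) ∑ X i)` at layer `l`. The `X i` are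
commuting involutions, so `U = ∏ exp((i π/2) X i) = i ^ n • ∏ X i`. Conjugation by `∏ X i` negates
each `Z i`, hence fixes every product of an even number of them; so `U` commutes with `H_f`, and it
commutes with `H_i` trivially. The inserted factor therefore moves out to the left of the state,
where, being unitary and commuting with `H_f`, it drops out of the expectation value.
-/

section Exponential

variable {𝔸 : Type*} [Ring 𝔸] [Algebra ℂ 𝔸] [TopologicalSpace 𝔸] [IsTopologicalRing 𝔸]
  [ContinuousSMul ℂ 𝔸] [T2Space 𝔸]

theorem exp_smul_of_mul_self_eq_one {a : 𝔸} (ha : a * a = 1) (t : ℂ) :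
    NormedSpace.exp (t • a) = cosh t • (1 : 𝔸) + sinh t • a := by
  have ha_even (k : ℕ) : a ^ (2 * k) = 1 := by rw [pow_mul, sq, ha, one_pow]
  have hsum : HasSum (fun k : ℕ ↦ (k.factorial⁻¹ : ℂ) • (t • a) ^ k)
      (cosh t • (1 : 𝔸) + sinh t • a) := by
    apply HasSum.even_add_odd
    · convert (hasSum_cosh t).smul_const (1 : 𝔸) using 2 with k
      rw [smul_pow, ha_even, smul_smul, div_eq_inv_mul]
    · convert (hasSum_sinh t).smul_const a using 2 with k
      rw [smul_pow, pow_succ a, ha_even, one_mul, smul_smul, div_eq_inv_mul]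
  rw [NormedSpace.exp_eq_tsum ℂ]
  exact hsum.tsum_eq

theorem exp_I_mul_pi_div_two_smul_of_mul_self_eq_one {a : 𝔸} (ha : a * a = 1) :
    NormedSpace.exp ((I * Real.pi / 2) • a) = I • a := by
  have hangle : I * Real.pi / 2 = (Real.pi / 2 : ℂ) * I := by ring
  rw [exp_smul_of_mul_self_eq_one ha, hangle, cosh_mul_I, sinh_mul_I, cos_pi_div_two,
    sin_pi_div_two, zero_smul, zero_add, one_mul]

end Exponential

section Monoid

theorem noncommProd_smul {ι M N : Type*} [Monoid M] [Monoid N] [MulAction M N]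
    [IsScalarTower M N N] [SMulCommClass M N N] (s : Finset ι) (c : M) (f : ι → N)
    (hf : (s : Set ι).Pairwise (Function.onFun Commute f)) :
    s.noncommProd (fun i ↦ c • f i)
        (hf.imp fun _ _ h ↦ (h.smul_left c).smul_right c)
      = c ^ s.card • s.noncommProd f hf := by
  classical
  induction s using Finset.induction_on with
  | empty => simp
  | insert i s hi ih =>
    rw [Finset.noncommProd_insert_of_notMem _ _ _ _ hi,
      Finset.noncommProd_insert_of_notMem _ _ _ _ hi,
      ih (hf.mono (by simp)), smul_mul_smul_comm, Finset.card_insert_of_notMem hi, pow_succ']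

theorem prod_map_update_mul_of_commute {ι M : Type*} [DecidableEq ι] [Monoid M] {L : List ι}
    (hL : L.Nodup) {l : ι} (hl : l ∈ L) (f : ι → M) {u : M}
    (hu : ∀ k ∈ L, Commute u (f k)) :
    (L.map (Function.update f l (u * f l))).prod = u * (L.map f).prod := by
  induction L with
  | nil => simp at hl
  | cons k L ih =>
    obtain ⟨hkL, hL⟩ := List.nodup_cons.1 hL
    simp only [List.map_cons, List.prod_cons]
    rcases List.mem_cons.1 hl with rfl | hlL
    · have htail : L.map (Function.update f l (u * f l)) = L.map f :=
        List.map_congr_left fun j hj ↦ Function.update_of_ne (ne_of_mem_of_not_mem hj hkL) _ _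
      rw [htail, Function.update_self, mul_assoc]
    · rw [ih hL hlL fun j hj ↦ hu j (List.mem_cons_of_mem k hj),
        Function.update_of_ne (ne_of_mem_of_not_mem hlL hkL).symm,
        (hu k List.mem_cons_self).symm.left_comm]

end Monoid

theorem star_mulVec_dotProduct_mulVec_of_commute {m α : Type*} [Fintype m] [DecidableEq m]
    [CommRing α] [StarRing α] {U A : Matrix m m α} (hU : U ∈ unitaryGroup m α)
    (hUA : Commute U A) (v : m → α) :
    star (U *ᵥ v) ⬝ᵥ A *ᵥ (U *ᵥ v) = star v ⬝ᵥ A *ᵥ v := by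
  rw [mulVec_mulVec, ← hUA.eq, star_mulVec, ← dotProduct_mulVec, mulVec_mulVec, ← mul_assoc,
    ← star_eq_conjTranspose, mem_unitaryGroup_iff'.1 hU, one_mul]

/-- The evolution `exp(-(i t/2) H)` generated by `H`, with the half-angle normalization of
`qaoaLayer`. -/
noncomputable def evolution {m : Type*} [Fintype m] [DecidableEq m] (H : Matrix m m ℂ) (t : ℝ) :
    Matrix m m ℂ :=
  NormedSpace.exp ((-(I * (t : ℂ) / 2)) • H)

section Evolution

variable {m : Type*} [Fintype m] [DecidableEq m] {H A : Matrix m m ℂ}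

theorem evolution_add (H : Matrix m m ℂ) (s t : ℝ) :
    evolution H (s + t) = evolution H s * evolution H t := by
  have hcomm : Commute ((-(I * (s : ℂ) / 2)) • H) ((-(I * (t : ℂ) / 2)) • H) :=
    ((Commute.refl H).smul_left _).smul_right _
  rw [evolution, evolution, evolution, ← Matrix.exp_add_of_commute _ _ hcomm, ← add_smul]
  congr 2
  push_cast
  ring

theorem commute_evolution_right (h : Commute A H) (t : ℝ) : Commute A (evolution H t) :=
  (h.smul_right _).exp_right

theorem conjTranspose_evolution (hH : H.IsHermitian) (t : ℝ) :
    (evolution H t)ᴴ = evolution H (-t) := by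
  rw [evolution, evolution, ← Matrix.exp_conjTranspose, conjTranspose_smul, hH.eq]
  congr 2
  simp

theorem evolution_mem_unitaryGroup (hH : H.IsHermitian) (t : ℝ) :
    evolution H t ∈ unitaryGroup m ℂ := by
  rw [mem_unitaryGroup_iff', star_eq_conjTranspose, conjTranspose_evolution hH, ← evolution_add,
    neg_add_cancel]
  simp [evolution]

end Evolution

section Qaoa

variable {m : Type} [Fintype m] [DecidableEq m] {p : ℕ} {Hi Hf : Matrix m m ℂ} {T : ℝ}

theorem qaoaLayer_add (Hi Hf : Matrix m m ℂ) (s β γ : ℝ) :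
    qaoaLayer Hi Hf (s + β) γ = evolution Hi s * qaoaLayer Hi Hf β γ := by
  change evolution Hi (s + β) * evolution Hf γ = evolution Hi s * (evolution Hi β * evolution Hf γ)
  rw [evolution_add, mul_assoc]

theorem commute_evolution_qaoaLayer (hT : Commute (evolution Hi T) Hf) (β γ : ℝ) :
    Commute (evolution Hi T) (qaoaLayer Hi Hf β γ) :=
  (commute_evolution_right (commute_evolution_right (.refl Hi) T).symm β).mul_right
    (commute_evolution_right hT γ)

theorem qaoaState_update_add (hT : Commute (evolution Hi T) Hf) (psi0 : m → ℂ) (l : Fin p)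
    (β γ : Fin p → ℝ) :
    qaoaState p Hi Hf psi0 (Function.update β l (β l + T)) γ
      = evolution Hi T *ᵥ qaoaState p Hi Hf psi0 β γ := by
  let layer (k : Fin p) : Matrix m m ℂ := qaoaLayer Hi Hf (β k) (γ k)
  have hlayer : (fun k ↦ qaoaLayer Hi Hf (Function.update β l (β l + T) k) (γ k))
      = Function.update layer l (evolution Hi T * layer l) := by
    funext k
    rw [Function.apply_update (fun k b ↦ qaoaLayer Hi Hf b (γ k)), add_comm, qaoaLayer_add]
  have hprod := prod_map_update_mul_of_commute (List.nodup_reverse.2 (List.nodup_finRange p))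
    (List.mem_reverse.2 (List.mem_finRange l)) layer
    fun k _ ↦ commute_evolution_qaoaLayer hT (β k) (γ k)
  rw [qaoaState, qaoaState, hlayer, hprod, mulVec_mulVec]

theorem qaoaEnergy_update_add (hHi : Hi.IsHermitian) (hT : Commute (evolution Hi T) Hf)
    (psi0 : m → ℂ) (l : Fin p) (β γ : Fin p → ℝ) :
    qaoaEnergy p Hi Hf psi0 (Function.update β l (β l + T)) γ
      = qaoaEnergy p Hi Hf psi0 β γ := by
  rw [qaoaEnergy, qaoaState_update_add hT]
  exact star_mulVec_dotProduct_mulVec_of_commute (evolution_mem_unitaryGroup hHi T) hT _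

end Qaoa

section Pauli

variable {n : ℕ}

theorem bitFlip_bitFlip (i : Fin n) (x : Fin n → Fin 2) : bitFlip n i (bitFlip n i x) = x := by
  have hflip : x i + 1 + 1 = x i := by lia
  rw [bitFlip, bitFlip, Function.update_self, Function.update_idem, hflip, Function.update_eq_self]

theorem pauliX_mul_self (i : Fin n) : PauliX n i * PauliX n i = 1 := by
  ext x y
  simp only [pauliX_mul_pauliX, bitFlip_bitFlip, Matrix.one_apply, eq_comm]

theorem pauliX_isHermitian (i : Fin n) : (PauliX n i).IsHermitian := by
  ext x y
  simp only [conjTranspose_apply, PauliX, eq_comm, ne_comm, apply_ite star, star_one, star_zero]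

theorem neg_sum_pauliX_isHermitian : (-∑ i, PauliX n i).IsHermitian :=
  (isSelfAdjoint_sum _ fun i _ ↦ pauliX_isHermitian i).neg

theorem pauliX_semiconjBy_pauliZ (i : Fin n) :
    SemiconjBy (PauliX n i) (PauliZ n i) (-PauliZ n i) := by
  ext x y
  rw [PauliZ, mul_diagonal, neg_mul, neg_apply, diagonal_mul, pauliX_eq]
  by_cases hy : y = bitFlip n i x
  · subst hy
    simp only [bitFlip, Function.update_self]
    generalize x i = b
    fin_cases b <;> simp
  · simp [hy]

theorem pauliX_commute_pauliZ {i j : Fin n} (hij : i ≠ j) :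
    Commute (PauliX n i) (PauliZ n j) := by
  ext x y
  rw [PauliZ, mul_diagonal, diagonal_mul, pauliX_eq]
  by_cases hy : y = bitFlip n i x
  · simp [hy, bitFlip, hij.symm]
  · simp [hy]

theorem pairwise_commute_pauliX (s : Finset (Fin n)) :
    (s : Set (Fin n)).Pairwise (Function.onFun Commute (PauliX n)) :=
  fun i _ j _ _ ↦ pauliX_commute n i j

theorem flipAll_semiconjBy_pauliZ (j : Fin n) :
    SemiconjBy (flipAll n) (PauliZ n j) (-PauliZ n j) := by
  have hsplit : flipAll n
      = PauliX n j * (Finset.univ.erase j).noncommProd (PauliX n) (pairwise_commute_pauliX _) :=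
    (Finset.mul_noncommProd_erase _ (Finset.mem_univ j) _ _).symm
  rw [hsplit]
  refine (pauliX_semiconjBy_pauliZ j).mul_left (Finset.noncommProd_commute _ _ _ _ ?_).symm
  exact fun i hi ↦ (pauliX_commute_pauliZ (Finset.ne_of_mem_erase hi)).symm

theorem flipAll_semiconjBy_ZProd (S : Finset (Fin n)) :
    SemiconjBy (flipAll n) (ZProd n S) ((-1) ^ S.card * ZProd n S) := by
  induction S using Finset.induction_on with
  | empty =>
    have hempty : ZProd n ∅ = 1 := Finset.noncommProd_empty _ _
    simp [hempty]
  | insert j S hj ih =>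
    have hinsert : ZProd n (insert j S) = PauliZ n j * ZProd n S :=
      Finset.noncommProd_insert_of_notMem _ _ _ _ hj
    have hsign : (-1) ^ (insert j S).card * ZProd n (insert j S)
        = -PauliZ n j * ((-1) ^ S.card * ZProd n S) := by
      rw [hinsert, Finset.card_insert_of_notMem hj, pow_succ, mul_assoc, neg_one_mul, ← neg_mul,
        ((Commute.neg_one_left _).pow_left _).left_comm]
    rw [hsign, hinsert]
    exact (flipAll_semiconjBy_pauliZ j).mul_right ih

theorem flipAll_commute_sum_smul_ZProd (a : Finset (Fin n) → ℂ)
    (ha : ∀ S : Finset (Fin n), Odd S.card → a S = 0) :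
    Commute (flipAll n) (∑ S, a S • ZProd n S) := by
  refine Commute.sum_right _ _ _ fun S _ ↦ ?_
  rcases S.card.even_or_odd with hS | hS
  · have hcomm : Commute (flipAll n) (ZProd n S) := by
      simpa only [hS.neg_one_pow, one_mul] using! flipAll_semiconjBy_ZProd S
    exact hcomm.smul_right _
  · simp [ha S hS]

theorem evolution_neg_sum_pauliX_pi :
    evolution (-∑ i, PauliX n i) Real.pi = I ^ n • flipAll n := by
  have hcomm (c : ℂ) : ((Finset.univ : Finset (Fin n)) : Set (Fin n)).Pairwise
      (Function.onFun Commute fun i ↦ c • PauliX n i) :=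
    (pairwise_commute_pauliX _).imp fun _ _ h ↦ (h.smul_left c).smul_right c
  calc evolution (-∑ i, PauliX n i) Real.pi
      = NormedSpace.exp (∑ i, (I * Real.pi / 2) • PauliX n i) := by
        rw [evolution, neg_smul_neg, Finset.smul_sum]
    _ = Finset.univ.noncommProd (fun i ↦ I • PauliX n i) (hcomm I) :=
        (Matrix.exp_sum_of_commute _ _ (hcomm _)).trans <|
          Finset.noncommProd_congr rfl
            (fun i _ ↦ exp_I_mul_pi_div_two_smul_of_mul_self_eq_one (pauliX_mul_self i)) _
    _ = I ^ (Finset.univ : Finset (Fin n)).card • flipAll n :=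
        noncommProd_smul _ _ _ (pairwise_commute_pauliX _)
    _ = I ^ n • flipAll n := by rw [Finset.card_univ, Fintype.card_fin]

end Pauli

theorem qaoa_energy_beta_periodic_pubo_general (n p : ℕ)
    (Hf : Matrix (Fin n → Fin 2) (Fin n → Fin 2) ℂ) (hHf : Commute (flipAll n) Hf)
    (psi0 : (Fin n → Fin 2) → ℂ) (l : Fin p) (β γ : Fin p → ℝ) :
    qaoaEnergy p (-∑ i, PauliX n i) Hf psi0 (Function.update β l (β l + Real.pi)) γ
      = qaoaEnergy p (-∑ i, PauliX n i) Hf psi0 β γ := by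
  refine qaoaEnergy_update_add neg_sum_pauliX_isHermitian ?_ psi0 l β γ
  rw [evolution_neg_sum_pauliX_pi]
  exact hHf.smul_left _

/-- **QAOA periodicity for PUBO problems.** For the mixer `H_i = -∑ X i` and a final
Hamiltonian `H_f = ∑_S a S • ∏_{i ∈ S} Z i` whose coefficients vanish on all subsets of
odd cardinality (only even-order spin interactions), starting from the uniform
superposition, the energy landscape is `π`-periodic in each `β` variable. -/
theorem qaoa_energy_beta_periodic_pubo (n p : ℕ) (hn : 1 ≤ n) (hp : 1 ≤ p)
    (a : Finset (Fin n) → ℝ) (ha_even : ∀ S : Finset (Fin n), Odd S.card → a S = 0)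
    (Hi Hf : Matrix (Fin n → Fin 2) (Fin n → Fin 2) ℂ)
    (hHi : Hi = -∑ i, PauliX n i)
    (hHf : Hf = ∑ S : Finset (Fin n), (a S : ℂ) • ZProd n S)
    (l : Fin p) (β γ : Fin p → ℝ) :
    qaoaEnergy p Hi Hf (psiPlus n) (Function.update β l (β l + Real.pi)) γ
      = qaoaEnergy p Hi Hf (psiPlus n) β γ := by
  subst hHi hHf
  exact qaoa_energy_beta_periodic_pubo_general n p _
    (flipAll_commute_sum_smul_ZProd _ fun S hS ↦ by rw [ha_even S hS, ofReal_zero]) _ l β γ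
end

section
/- Let n ≥ 1, let a : Fin n → Fin n → ℝ, and set H_i = −∑_{i} X i and H_f = ∑_{i < j} (a i j) • (Z i * Z j) (a final Hamiltonian with only quadratic terms in the spins). Then the flip-all operator ∏_{i : Fin n} X i commutes with every QAOA layer: for all real β, γ, (∏_i X i) * L(β,γ) = L(β,γ) * (∏_i X i), where L(β,γ) = Matrix.exp(−(I*β/2) • H_i) * Matrix.exp(−(I*γ/2) • H_f). -/
open Complex Matrix

/-! Conjugation by `X i` negates `Z i` and fixes every other `Z j`, so conjugation by the flip-all
operator negates every `Z i`. The two signs cancel in each product `Z i * Z j`, while the `X i`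
commute among themselves: both Hamiltonians, hence their exponentials, commute with flip-all. -/

lemma pauliX_semiconjBy_diagonal (n : ℕ) (i : Fin n) (d : (Fin n → Fin 2) → ℂ) :
    SemiconjBy (PauliX n i) (diagonal d) (diagonal (d ∘ bitFlip n i)) := by
  ext x y
  rw [mul_diagonal, diagonal_mul, pauliX_eq]
  by_cases h : y = bitFlip n i x <;> simp [h]

lemma neg_one_pow_bitFlip_self {R : Type*} [Monoid R] [HasDistribNeg R] (n : ℕ) (i : Fin n)
    (x : Fin n → Fin 2) :
    (-1 : R) ^ (bitFlip n i x i : ℕ) = -(-1) ^ (x i : ℕ) := by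
  rw [bitFlip, Function.update_self]
  generalize x i = b
  fin_cases b <;> simp

lemma pauliX_semiconjBy_pauliZ_neg (n : ℕ) (i : Fin n) :
    SemiconjBy (PauliX n i) (PauliZ n i) (-PauliZ n i) := by
  have h := pauliX_semiconjBy_diagonal n i fun x => (-1) ^ (x i : ℕ)
  simpa only [PauliZ, diagonal_neg, Function.comp_def, neg_one_pow_bitFlip_self] using h

lemma pauliX_commute_pauliZ_of_ne {n : ℕ} {i j : Fin n} (hji : j ≠ i) :
    Commute (PauliX n i) (PauliZ n j) := by
  have h := pauliX_semiconjBy_diagonal n i fun x => (-1) ^ (x j : ℕ)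
  simpa only [Commute, PauliZ, Function.comp_def, bitFlip, Function.update_of_ne hji] using h

lemma flipAll_semiconjBy_pauliZ_neg (n : ℕ) (i : Fin n) :
    SemiconjBy (flipAll n) (PauliZ n i) (-PauliZ n i) := by
  let others := (Finset.univ.erase i).noncommProd (PauliX n) fun j _ k _ _ => pauliX_commute n j k
  have hflip : flipAll n = PauliX n i * others :=
    (Finset.mul_noncommProd_erase _ (Finset.mem_univ i) _ _).symm
  have hothers : Commute (PauliZ n i) others :=
    Finset.noncommProd_commute _ _ _ _ fun j hj =>
      (pauliX_commute_pauliZ_of_ne (Finset.ne_of_mem_erase hj).symm).symm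
  rw [hflip]
  exact (pauliX_semiconjBy_pauliZ_neg n i).mul_left hothers.symm

lemma flipAll_commute_pauliZ_mul_pauliZ (n : ℕ) (i j : Fin n) :
    Commute (flipAll n) (PauliZ n i * PauliZ n j) := by
  have h := (flipAll_semiconjBy_pauliZ_neg n i).mul_right (flipAll_semiconjBy_pauliZ_neg n j)
  rwa [neg_mul_neg] at h

lemma flipAll_commute_pauliX (n : ℕ) (i : Fin n) : Commute (flipAll n) (PauliX n i) :=
  (Finset.noncommProd_commute _ _ _ _ fun j _ => pauliX_commute n i j).symm

lemma commute_qaoaLayer_of_commute {m : Type} [Fintype m] [DecidableEq m]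
    {A Hi Hf : Matrix m m ℂ} (hHi : Commute A Hi) (hHf : Commute A Hf) (β γ : ℝ) :
    Commute A (qaoaLayer Hi Hf β γ) :=
  (hHi.smul_right _).exp_right.mul_right (hHf.smul_right _).exp_right

/-- The products `Z i * Z j` generate the polynomials in the `Z i` with all monomials of even
degree. -/
theorem flipAll_commute_qaoaLayer_general {n : ℕ}
    {Hi Hf : Matrix (Fin n → Fin 2) (Fin n → Fin 2) ℂ}
    (hHi : Hi ∈ Algebra.adjoin ℂ (Set.range (PauliX n)))
    (hHf : Hf ∈ Algebra.adjoin ℂ (Set.range fun p : Fin n × Fin n => PauliZ n p.1 * PauliZ n p.2))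
    (β γ : ℝ) : Commute (flipAll n) (qaoaLayer Hi Hf β γ) := by
  refine commute_qaoaLayer_of_commute ?_ ?_ β γ
  · refine Algebra.commute_of_mem_adjoin_of_forall_mem_commute hHi ?_
    rintro _ ⟨i, rfl⟩
    exact flipAll_commute_pauliX n i
  · refine Algebra.commute_of_mem_adjoin_of_forall_mem_commute hHf ?_
    rintro _ ⟨⟨i, j⟩, rfl⟩
    exact flipAll_commute_pauliZ_mul_pauliZ n i j

/-- **The flip-all operator commutes with every QAOA layer** when the final Hamiltonian
has only quadratic spin terms. -/
theorem flipAll_commute_qaoaLayer (n : ℕ) (hn : 1 ≤ n) (a : Fin n → Fin n → ℝ)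
    (Hi Hf : Matrix (Fin n → Fin 2) (Fin n → Fin 2) ℂ)
    (hHi : Hi = -∑ i, PauliX n i)
    (hHf : Hf = ∑ i, ∑ j ∈ Finset.univ.filter (fun j => i < j),
      (a i j : ℂ) • (PauliZ n i * PauliZ n j))
    (β γ : ℝ) :
    flipAll n * qaoaLayer Hi Hf β γ = qaoaLayer Hi Hf β γ * flipAll n := by
  subst hHi hHf
  refine flipAll_commute_qaoaLayer_general ?_ ?_ β γ
  · exact neg_mem (sum_mem fun i _ => Algebra.subset_adjoin (Set.mem_range_self i))
  · exact sum_mem fun i _ => sum_mem fun j _ =>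
      Subalgebra.smul_mem _ (Algebra.subset_adjoin (Set.mem_range_self (i, j))) _
end
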